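/- For every n ≥ 0, the number of nonzero entries on row n of Pascal's triangle modulo 8 satisfies, as an identity in the rational numbers, a_8(n) = 2^{|n|_1} · (1 + (3/8)|n|_{10} + |n|_{100} + (1/4)|n|_{110} + (1/8)|n|_{10}^2), where subword counts are taken in the base-2 representation of n. -/

import Mathlib

/-- The number of integers `0 ≤ m ≤ n` such that `C(n,m)` is not divisible by `k`,
i.e. the number of nonzero entries on row `n` of Pascal's triangle modulo `k`. -/
def rowCount (k n : ℕ) : ℕ :=
  ((Finset.range (n + 1)).filter fun m => ¬ k ∣ n.choose m).card

/-- The number of borrows when subtracting `m` from `n` in base `b` (for `m ≤ n`):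
the number of indices `i ≥ 0` with `m mod b^(i+1) > n mod b^(i+1)`. -/
def borrowCount (b n m : ℕ) : ℕ :=
  ((Finset.range (Nat.digits b n).length).filter fun i => n % b ^ (i + 1) < m % b ^ (i + 1)).card

/-- `A_n(β)`: the number of `0 ≤ m ≤ n` with exactly `β` borrows
when subtracting `m` from `n` in base `b`. -/
def borrowA (b n β : ℕ) : ℕ :=
  ((Finset.range (n + 1)).filter fun m => borrowCount b n m = β).card

/-- `B_n(β)` with respect to `L` digit positions: the number of `n < m ≤ b^L - 1` such that
exactly `β` of the indices `0 ≤ i ≤ L - 1` satisfy `m mod b^(i+1) > n mod b^(i+1)`. -/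
def borrowB (b L n β : ℕ) : ℕ :=
  ((Finset.Ioc n (b ^ L - 1)).filter fun m =>
    ((Finset.range L).filter fun i => n % b ^ (i + 1) < m % b ^ (i + 1)).card = β).card

/-- The base-`b` digit string of `n`, most significant digit first (empty for `n = 0`). -/
def wordOf (b n : ℕ) : List ℕ := (Nat.digits b n).reverse

/-- `|n|_w`: the number of occurrences of `w` as a contiguous subword of the
base-`b` digit string of `n`. -/
def subwordCount (b n : ℕ) (w : List ℕ) : ℕ :=
  ((Finset.range ((wordOf b n).length + 1 - w.length)).filter fun s =>
    ((wordOf b n).drop s).take w.length = w).card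

/-- `c(w_k ⋯ w_0)` for a word `w = [w_k, …, w_0]` (most significant letter first):
`(w_k/(w_k+1)) · (∏_{h=1}^{k−1} (b−w_{k−h})/(w_{k−h}+1)) · (b−w_0−1)/(w_0+1)`. -/
def cword (b : ℕ) (w : List ℕ) : ℚ :=
  ((w.getD 0 0 : ℚ) / ((w.getD 0 0 : ℚ) + 1)) *
    (∏ h ∈ Finset.Ico 1 (w.length - 1),
      ((b : ℚ) - (w.getD h 0 : ℚ)) / ((w.getD h 0 : ℚ) + 1)) *
    (((b : ℚ) - (w.getD (w.length - 1) 0 : ℚ) - 1) / ((w.getD (w.length - 1) 0 : ℚ) + 1))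

/-- The sum `Σ c(v)c(w)⋯c(z)` over all sets of pairwise nonoverlapping contiguous subwords
of `W` (identified by their position intervals: a pair `(s, len)` denotes the subword
occupying positions `s, …, s+len-1`) whose multiset of lengths equals `P`. -/
def nonoverlapSum (b : ℕ) (W : List ℕ) (P : Multiset ℕ) : ℚ :=
  ∑ S ∈ ((Finset.range W.length ×ˢ Finset.Icc 1 W.length).powerset.filter fun S =>
      Multiset.map Prod.snd S.val = P ∧
      (∀ q ∈ S, q.1 + q.2 ≤ W.length) ∧
      (∀ q ∈ S, ∀ r ∈ S, q ≠ r → q.1 + q.2 ≤ r.1 ∨ r.1 + r.2 ≤ q.1)),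
    ∏ q ∈ S, cword b ((W.drop q.1).take q.2)

/-!
By Kummer's theorem `padicValNat p (n.choose m)` is the number of borrows in the base-`p`
subtraction `n - m`. Reading the last digit of `n` and `m` off changes the count by the borrow it
produces, so the rows of Pascal's triangle modulo powers of `p` satisfy a linear recursion on
digits, provided one also follows the subtractions `n - m - 1` that start with an incoming borrow.
For `p = 2`, only `rowCount 2`, `rowCount 4`, `rowCount 8` and the counts with incoming borrow for
the moduli `2` and `4` occur, and their closed forms follow by induction on binary digits, since
appending a digit to the word of `n` changes a subword count exactly when it completes an
occurrence at the end.
-/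

open Nat (count)
open scoped Nat

/-- `n! / (m! (n - m - c)!)` if `m + c ≤ n`, and `0` otherwise. For `c ≤ 1` its `p`-adic valuation
is the number of borrows when `m` is subtracted from `n` in base `p` with incoming borrow `c`. -/
def borrowChoose (c n m : ℕ) : ℕ := (n - m).descFactorial c * n.choose m

theorem borrowChoose_zero (n m : ℕ) : borrowChoose 0 n m = n.choose m := by
  simp [borrowChoose]

theorem borrowChoose_eq_zero_iff {c n m : ℕ} : borrowChoose c n m = 0 ↔ n < m + c := by
  rw [borrowChoose, mul_eq_zero, Nat.descFactorial_eq_zero_iff_lt, Nat.choose_eq_zero_iff]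
  omega

theorem borrowChoose_mul_factorial_mul_factorial (c m q : ℕ) :
    borrowChoose c (m + c + q) m * (m ! * q !) = (m + c + q)! := by
  have hchoose := Nat.choose_mul_factorial_mul_factorial (n := m + c + q) (k := m) (by omega)
  have hdesc := Nat.factorial_mul_descFactorial (n := c + q) (k := c) (by omega)
  rw [show m + c + q - m = c + q by omega] at hchoose
  rw [Nat.add_sub_cancel_left] at hdesc
  rw [borrowChoose, show m + c + q - m = c + q by omega, ← hchoose, ← hdesc]
  ring

section Prime

variable {p : ℕ} [Fact p.Prime]

theorem padicValNat_borrowChoose_add (c m q : ℕ) :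
    padicValNat p (borrowChoose c (m + c + q) m) + (padicValNat p m ! + padicValNat p q !) =
      padicValNat p (m + c + q)! := by
  have hne : borrowChoose c (m + c + q) m ≠ 0 := by rw [Ne, borrowChoose_eq_zero_iff]; omega
  rw [← borrowChoose_mul_factorial_mul_factorial, padicValNat.mul hne (by positivity),
    padicValNat.mul (by positivity) (by positivity)]

theorem padicValNat_factorial_mul_add_of_lt (n : ℕ) {d : ℕ} (hd : d < p) :
    padicValNat p (p * n + d)! = padicValNat p n ! + n := by
  rw [padicValNat_factorial_mul_add n hd, padicValNat_factorial_mul]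

variable {c c' d e r : ℕ}

/-- One digit of the subtraction: `d - e - c` leaves the digit `r` and the outgoing borrow `c'`. -/
theorem padicValNat_borrowChoose_mul_add (hd : d < p) (he : e < p) (hr : r < p)
    (hdigit : e + c + r = d + p * c') (m q : ℕ) :
    padicValNat p (borrowChoose c (p * (m + c' + q) + d) (p * m + e)) =
      padicValNat p (borrowChoose c' (m + c' + q) m) + c' := by
  have hsplit : p * (m + c' + q) + d = p * m + e + c + (p * q + r) := by
    rw [mul_add, mul_add]; omega
  have hlong := padicValNat_borrowChoose_add (p := p) c (p * m + e) (p * q + r)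
  have hshort := padicValNat_borrowChoose_add (p := p) c' m q
  rw [← hsplit, padicValNat_factorial_mul_add_of_lt _ hd, padicValNat_factorial_mul_add_of_lt _ he,
    padicValNat_factorial_mul_add_of_lt _ hr] at hlong
  omega

theorem pow_dvd_borrowChoose_mul_add_iff (hd : d < p) (he : e < p) (hr : r < p)
    (hdigit : e + c + r = d + p * c') (k n m : ℕ) :
    p ^ (k + c') ∣ borrowChoose c (p * n + d) (p * m + e) ↔ p ^ k ∣ borrowChoose c' n m := by
  rcases lt_or_ge n (m + c') with hlt | hge
  · have hlt' : p * n + d < p * m + e + c := by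
      have := Nat.mul_le_mul_left p (Nat.succ_le_of_lt hlt)
      rw [Nat.mul_succ, mul_add] at this
      omega
    simp only [borrowChoose_eq_zero_iff.2 hlt, borrowChoose_eq_zero_iff.2 hlt', dvd_zero]
  · obtain ⟨q, rfl⟩ := Nat.exists_eq_add_of_le hge
    have hval := padicValNat_borrowChoose_mul_add hd he hr hdigit m q
    have hne : borrowChoose c' (m + c' + q) m ≠ 0 := by
      rw [Ne, borrowChoose_eq_zero_iff]; omega
    have hne' : borrowChoose c (p * (m + c' + q) + d) (p * m + e) ≠ 0 := by
      rw [Ne, borrowChoose_eq_zero_iff, mul_add, mul_add]; omega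
    rw [padicValNat_dvd_iff_le hne, padicValNat_dvd_iff_le hne', hval, add_le_add_iff_right]

end Prime

/-- The analogue of `rowCount` with incoming borrow: the number of `m ≤ n` for which
`borrowChoose c n m` is not divisible by `k`. -/
def borrowRowCount (c k n : ℕ) : ℕ := count (fun m => ¬ k ∣ borrowChoose c n m) (n + 1)

theorem borrowRowCount_zero_left (k n : ℕ) : borrowRowCount 0 k n = rowCount k n := by
  simp only [borrowRowCount, rowCount, borrowChoose_zero, Nat.count_eq_card_filter_range]

theorem borrowRowCount_modulus_one (c n : ℕ) : borrowRowCount c 1 n = 0 := by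
  simp [borrowRowCount, Nat.count_false]

theorem borrowRowCount_eq_count {c k n L : ℕ} (h : n < L) :
    borrowRowCount c k n = count (fun m => ¬ k ∣ borrowChoose c n m) L := by
  obtain ⟨t, rfl⟩ := Nat.exists_eq_add_of_le (Nat.succ_le_of_lt h)
  have hzero (m : ℕ) : borrowChoose c n (n + 1 + m) = 0 := borrowChoose_eq_zero_iff.2 (by omega)
  simp [borrowRowCount, Nat.count_add, hzero, Nat.count_false]

theorem count_mul_eq_sum_count (P : ℕ → Prop) [DecidablePred P] (b L : ℕ) :
    count P (b * L) = ∑ e ∈ Finset.range b, count (fun m => P (b * m + e)) L := by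
  induction L with
  | zero => simp
  | succ L ih =>
    simp only [Nat.mul_succ, Nat.count_add, ih, Nat.count_succ, Finset.sum_add_distrib,
      Nat.count_eq_card_filter_range (fun e => P (b * L + e)), Finset.card_filter]

theorem borrowRowCount_pow_mul_add {p : ℕ} [Fact p.Prime] {c d : ℕ} (hc : c ≤ 1) (hd : d < p)
    (k n : ℕ) :
    borrowRowCount c (p ^ (k + 1)) (p * n + d) =
      (d + 1 - c) * rowCount (p ^ (k + 1)) n +
        (p + c - (d + 1)) * borrowRowCount 1 (p ^ k) n := by
  have hsize : p * n + d < p * (n + 1) := by rw [Nat.mul_succ]; omega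
  have hrange : p = (d + 1 - c) + (p + c - (d + 1)) := by omega
  have hnoBorrow : ∀ e ∈ Finset.range (d + 1 - c),
      count (fun m => ¬ p ^ (k + 1) ∣ borrowChoose c (p * n + d) (p * m + e)) (n + 1) =
        rowCount (p ^ (k + 1)) n := fun e he => by
    rw [Finset.mem_range] at he
    simp only [← borrowRowCount_zero_left, borrowRowCount, ← pow_dvd_borrowChoose_mul_add_iff hd
      (show e < p by omega) (show d - e - c < p by omega)
      (show e + c + (d - e - c) = d + p * 0 by omega), add_zero]
  have hborrow : ∀ i ∈ Finset.range (p + c - (d + 1)),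
      count (fun m => ¬ p ^ (k + 1) ∣ borrowChoose c (p * n + d) (p * m + (d + 1 - c + i)))
        (n + 1) = borrowRowCount 1 (p ^ k) n := fun i hi => by
    rw [Finset.mem_range] at hi
    simp only [borrowRowCount, pow_dvd_borrowChoose_mul_add_iff hd
      (show d + 1 - c + i < p by omega) (show p - 1 - i < p by omega)
      (show d + 1 - c + i + c + (p - 1 - i) = d + p * 1 by omega)]
  rw [borrowRowCount_eq_count hsize, count_mul_eq_sum_count]
  conv_lhs => enter [1, 1]; rw [hrange]
  rw [Finset.sum_range_add, Finset.sum_congr rfl hnoBorrow, Finset.sum_congr rfl hborrow]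
  simp only [Finset.sum_const, Finset.card_range, smul_eq_mul]

theorem rowCount_two_pow_two_mul (k n : ℕ) :
    rowCount (2 ^ (k + 1)) (2 * n) = rowCount (2 ^ (k + 1)) n + borrowRowCount 1 (2 ^ k) n := by
  simpa [borrowRowCount_zero_left] using
    borrowRowCount_pow_mul_add (p := 2) (c := 0) (d := 0) zero_le_one two_pos k n

theorem rowCount_two_pow_two_mul_add_one (k n : ℕ) :
    rowCount (2 ^ (k + 1)) (2 * n + 1) = 2 * rowCount (2 ^ (k + 1)) n := by
  simpa [borrowRowCount_zero_left] using
    borrowRowCount_pow_mul_add (p := 2) (c := 0) (d := 1) zero_le_one one_lt_two k n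

theorem borrowRowCount_two_pow_two_mul (k n : ℕ) :
    borrowRowCount 1 (2 ^ (k + 1)) (2 * n) = 2 * borrowRowCount 1 (2 ^ k) n := by
  simpa using borrowRowCount_pow_mul_add (p := 2) (c := 1) (d := 0) le_rfl two_pos k n

theorem borrowRowCount_two_pow_two_mul_add_one (k n : ℕ) :
    borrowRowCount 1 (2 ^ (k + 1)) (2 * n + 1) =
      rowCount (2 ^ (k + 1)) n + borrowRowCount 1 (2 ^ k) n := by
  simpa using borrowRowCount_pow_mul_add (p := 2) (c := 1) (d := 1) le_rfl one_lt_two k n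

/-- The number of occurrences of `w` as a contiguous subword of `W`, indexed by the starting
position as in `subwordCount`. -/
def occurrenceCount {α : Type*} [DecidableEq α] (w W : List α) : ℕ :=
  ((Finset.range (W.length + 1 - w.length)).filter fun s => (W.drop s).take w.length = w).card

theorem occurrenceCount_append_singleton {α : Type*} [DecidableEq α] {w : List α} (hw : w ≠ [])
    (W : List α) (d : α) :
    occurrenceCount w (W ++ [d]) =
      occurrenceCount w W + if w <:+ W ++ [d] then 1 else 0 := by
  have hpos : 0 < w.length := List.length_pos_iff.2 hw
  simp only [occurrenceCount, List.length_append, List.length_singleton]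
  rcases lt_or_ge (W.length + 1) w.length with hlong | hshort
  · have hnot : ¬ w <:+ W ++ [d] := fun h => by
      have := h.length_le
      rw [List.length_append, List.length_singleton] at this
      omega
    rw [if_neg hnot, show W.length + 1 + 1 - w.length = 0 by omega,
      show W.length + 1 - w.length = 0 by omega]
    simp
  · have hlength : ((W ++ [d]).drop (W.length + 1 - w.length)).length ≤ w.length := by
      rw [List.length_drop, List.length_append, List.length_singleton]
      omega
    have hlast : ((W ++ [d]).drop (W.length + 1 - w.length)).take w.length = w ↔
        w <:+ W ++ [d] := by
      rw [List.take_of_length_le hlength, List.suffix_iff_eq_drop, List.length_append,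
        List.length_singleton, eq_comm]
    rw [show W.length + 1 + 1 - w.length = W.length + 1 - w.length + 1 by omega,
      Finset.card_filter, Finset.sum_range_succ, Finset.card_filter]
    simp only [hlast]
    congr 1
    refine Finset.sum_congr rfl fun s hs => ?_
    rw [Finset.mem_range] at hs
    rw [List.drop_append_of_le_length (by omega), List.take_append_of_le_length]
    rw [List.length_drop]
    omega

theorem wordOf_zero (b : ℕ) : wordOf b 0 = [] := by simp [wordOf]

section Digits

variable {b d : ℕ}

theorem wordOf_mul_add (hb : 1 < b) (hd : d < b) {n : ℕ} (h : d ≠ 0 ∨ n ≠ 0) :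
    wordOf b (b * n + d) = wordOf b n ++ [d] := by
  rw [wordOf, add_comm, Nat.digits_add b hb d n hd h, List.reverse_cons, wordOf]

theorem isSuffix_wordOf_mul_add_iff (hb : 1 < b) (hd : d < b) {w : List ℕ} (hw : w ≠ [])
    (hw₀ : w ≠ [0]) (n : ℕ) :
    w <:+ wordOf b (b * n + d) ↔ w.getLast? = some d ∧ w.dropLast <:+ wordOf b n := by
  obtain ⟨v, a, rfl⟩ := w.eq_nil_or_concat'.resolve_left hw
  by_cases h : d ≠ 0 ∨ n ≠ 0
  · rw [wordOf_mul_add hb hd h, ← List.reverse_prefix]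
    simp
  · push Not at h
    obtain ⟨rfl, rfl⟩ := h
    simp only [mul_zero, add_zero, wordOf_zero, List.suffix_nil, List.getLast?_concat,
      List.dropLast_concat]
    aesop

theorem subwordCount_mul_add (hb : 1 < b) (hd : d < b) {w : List ℕ} (hw : w ≠ [])
    (hw₀ : w ≠ [0]) (n : ℕ) :
    subwordCount b (b * n + d) w =
      subwordCount b n w +
        if w.getLast? = some d ∧ w.dropLast <:+ wordOf b n then 1 else 0 := by
  simp only [← isSuffix_wordOf_mul_add_iff hb hd hw hw₀]
  by_cases h : d ≠ 0 ∨ n ≠ 0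
  · rw [wordOf_mul_add hb hd h, subwordCount, wordOf_mul_add hb hd h]
    exact occurrenceCount_append_singleton hw _ _
  · push Not at h
    obtain ⟨rfl, rfl⟩ := h
    simp [wordOf_zero, hw]

end Digits

theorem isSuffix_wordOf_two_mul_iff {w : List ℕ} (hw : w ≠ []) (hw₀ : w ≠ [0]) (n : ℕ) :
    w <:+ wordOf 2 (2 * n) ↔ w.getLast? = some 0 ∧ w.dropLast <:+ wordOf 2 n :=
  isSuffix_wordOf_mul_add_iff one_lt_two two_pos hw hw₀ n

theorem isSuffix_wordOf_two_mul_add_one_iff {w : List ℕ} (hw : w ≠ []) (hw₀ : w ≠ [0]) (n : ℕ) :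
    w <:+ wordOf 2 (2 * n + 1) ↔ w.getLast? = some 1 ∧ w.dropLast <:+ wordOf 2 n :=
  isSuffix_wordOf_mul_add_iff one_lt_two one_lt_two hw hw₀ n

theorem subwordCount_two_mul {w : List ℕ} (hw : w ≠ []) (hw₀ : w ≠ [0]) (n : ℕ) :
    subwordCount 2 (2 * n) w =
      subwordCount 2 n w +
        if w.getLast? = some 0 ∧ w.dropLast <:+ wordOf 2 n then 1 else 0 :=
  subwordCount_mul_add one_lt_two two_pos hw hw₀ n

theorem subwordCount_two_mul_add_one {w : List ℕ} (hw : w ≠ []) (hw₀ : w ≠ [0]) (n : ℕ) :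
    subwordCount 2 (2 * n + 1) w =
      subwordCount 2 n w +
        if w.getLast? = some 1 ∧ w.dropLast <:+ wordOf 2 n then 1 else 0 :=
  subwordCount_mul_add one_lt_two one_lt_two hw hw₀ n

theorem subwordCount_two_mul_one (n : ℕ) :
    subwordCount 2 (2 * n) [1] = subwordCount 2 n [1] := by
  simp [subwordCount_two_mul]

theorem subwordCount_two_mul_add_one_one (n : ℕ) :
    subwordCount 2 (2 * n + 1) [1] = subwordCount 2 n [1] + 1 := by
  simp [subwordCount_two_mul_add_one]

theorem subwordCount_two_mul_one_zero (n : ℕ) :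
    subwordCount 2 (2 * n) [1, 0] =
      subwordCount 2 n [1, 0] + if [1] <:+ wordOf 2 n then 1 else 0 := by
  simp [subwordCount_two_mul]

theorem subwordCount_two_mul_add_one_one_zero (n : ℕ) :
    subwordCount 2 (2 * n + 1) [1, 0] = subwordCount 2 n [1, 0] := by
  simp [subwordCount_two_mul_add_one]

theorem subwordCount_two_mul_one_zero_zero (n : ℕ) :
    subwordCount 2 (2 * n) [1, 0, 0] =
      subwordCount 2 n [1, 0, 0] + if [1, 0] <:+ wordOf 2 n then 1 else 0 := by
  simp [subwordCount_two_mul]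

theorem subwordCount_two_mul_add_one_one_zero_zero (n : ℕ) :
    subwordCount 2 (2 * n + 1) [1, 0, 0] = subwordCount 2 n [1, 0, 0] := by
  simp [subwordCount_two_mul_add_one]

theorem subwordCount_two_mul_one_one_zero (n : ℕ) :
    subwordCount 2 (2 * n) [1, 1, 0] =
      subwordCount 2 n [1, 1, 0] + if [1, 1] <:+ wordOf 2 n then 1 else 0 := by
  simp [subwordCount_two_mul]

theorem subwordCount_two_mul_add_one_one_one_zero (n : ℕ) :
    subwordCount 2 (2 * n + 1) [1, 1, 0] = subwordCount 2 n [1, 1, 0] := by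
  simp [subwordCount_two_mul_add_one]

theorem rowCount_zero_right {k : ℕ} (hk : k ≠ 1) : rowCount k 0 = 1 := by
  simp [rowCount, Finset.filter_singleton, hk]

theorem subwordCount_zero_middle {b : ℕ} {w : List ℕ} (hw : w ≠ []) : subwordCount b 0 w = 0 := by
  simp [subwordCount, wordOf_zero, hw.symm]

theorem rowCount_two_pow_one (n : ℕ) : rowCount (2 ^ 1) n = 2 ^ subwordCount 2 n [1] := by
  induction n using Nat.evenOddRec with
  | h0 => simp [rowCount_zero_right, subwordCount_zero_middle]
  | h_even n ih =>
    rw [rowCount_two_pow_two_mul, pow_zero, borrowRowCount_modulus_one, add_zero, ih,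
      subwordCount_two_mul_one]
  | h_odd n ih =>
    rw [rowCount_two_pow_two_mul_add_one, ih, subwordCount_two_mul_add_one_one, pow_succ']

theorem borrowRowCount_one_two_pow_one (n : ℕ) :
    (borrowRowCount 1 (2 ^ 1) n : ℚ) =
      if [1] <:+ wordOf 2 n then 2 ^ subwordCount 2 n [1] / 2 else 0 := by
  rcases Nat.even_or_odd' n with ⟨j, rfl | rfl⟩
  · have hone : ¬ [1] <:+ wordOf 2 (2 * j) := by simp [isSuffix_wordOf_two_mul_iff]
    rw [borrowRowCount_two_pow_two_mul, pow_zero, borrowRowCount_modulus_one, mul_zero, if_neg hone,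
      Nat.cast_zero]
  · have hone : [1] <:+ wordOf 2 (2 * j + 1) := by simp [isSuffix_wordOf_two_mul_add_one_iff]
    rw [borrowRowCount_two_pow_two_mul_add_one, pow_zero, borrowRowCount_modulus_one, add_zero,
      rowCount_two_pow_one, if_pos hone, subwordCount_two_mul_add_one_one]
    push_cast
    ring

theorem rowCount_two_pow_two (n : ℕ) :
    (rowCount (2 ^ 2) n : ℚ) =
      2 ^ subwordCount 2 n [1] * (1 + (1 / 2) * subwordCount 2 n [1, 0]) := by
  induction n using Nat.evenOddRec with
  | h0 => simp [rowCount_zero_right, subwordCount_zero_middle]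
  | h_even n ih =>
    rw [rowCount_two_pow_two_mul, Nat.cast_add, ih, borrowRowCount_one_two_pow_one,
      subwordCount_two_mul_one, subwordCount_two_mul_one_zero]
    push_cast
    split_ifs <;> ring
  | h_odd n ih =>
    rw [rowCount_two_pow_two_mul_add_one, Nat.cast_mul, ih, subwordCount_two_mul_add_one_one,
      subwordCount_two_mul_add_one_one_zero]
    push_cast
    ring

theorem borrowRowCount_one_two_pow_two (n : ℕ) :
    (borrowRowCount 1 (2 ^ 2) n : ℚ) =
      2 ^ subwordCount 2 n [1] *
        ((if [1] <:+ wordOf 2 n then 1 / 2 + (1 / 4) * (subwordCount 2 n [1, 0] : ℚ) else 0) +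
          (if [1, 0] <:+ wordOf 2 n then 1 else 0) +
          if [1, 1] <:+ wordOf 2 n then 1 / 4 else 0) := by
  rcases Nat.even_or_odd' n with ⟨j, rfl | rfl⟩
  · have hone : ¬ [1] <:+ wordOf 2 (2 * j) := by simp [isSuffix_wordOf_two_mul_iff]
    have honeZero : [1, 0] <:+ wordOf 2 (2 * j) ↔ [1] <:+ wordOf 2 j := by
      simp [isSuffix_wordOf_two_mul_iff]
    have honeOne : ¬ [1, 1] <:+ wordOf 2 (2 * j) := by simp [isSuffix_wordOf_two_mul_iff]
    rw [borrowRowCount_two_pow_two_mul, Nat.cast_mul, borrowRowCount_one_two_pow_one,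
      if_neg hone, if_neg honeOne, subwordCount_two_mul_one]
    simp only [honeZero]
    split_ifs <;> ring
  · have hone : [1] <:+ wordOf 2 (2 * j + 1) := by simp [isSuffix_wordOf_two_mul_add_one_iff]
    have honeZero : ¬ [1, 0] <:+ wordOf 2 (2 * j + 1) := by
      simp [isSuffix_wordOf_two_mul_add_one_iff]
    have honeOne : [1, 1] <:+ wordOf 2 (2 * j + 1) ↔ [1] <:+ wordOf 2 j := by
      simp [isSuffix_wordOf_two_mul_add_one_iff]
    rw [borrowRowCount_two_pow_two_mul_add_one, Nat.cast_add, rowCount_two_pow_two,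
      borrowRowCount_one_two_pow_one, if_pos hone, if_neg honeZero,
      subwordCount_two_mul_add_one_one, subwordCount_two_mul_add_one_one_zero]
    simp only [honeOne]
    split_ifs <;> ring

/-- For every `n ≥ 0`, as an identity in the rational numbers:
`a_8(n) = 2^{|n|_1} · (1 + (3/8)|n|_{10} + |n|_{100} + (1/4)|n|_{110} + (1/8)|n|_{10}²)`,
subword counts taken in base 2. -/
theorem stmt16 (n : ℕ) :
    (rowCount 8 n : ℚ) =
      2 ^ subwordCount 2 n [1] *
        (1 + (3 / 8) * (subwordCount 2 n [1, 0] : ℚ) + (subwordCount 2 n [1, 0, 0] : ℚ) +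
          (1 / 4) * (subwordCount 2 n [1, 1, 0] : ℚ) +
          (1 / 8) * (subwordCount 2 n [1, 0] : ℚ) ^ 2) := by
  change (rowCount (2 ^ 3) n : ℚ) = _
  induction n using Nat.evenOddRec with
  | h0 => simp [rowCount_zero_right, subwordCount_zero_middle]
  | h_even n ih =>
    rw [rowCount_two_pow_two_mul, Nat.cast_add, ih, borrowRowCount_one_two_pow_two,
      subwordCount_two_mul_one, subwordCount_two_mul_one_zero, subwordCount_two_mul_one_zero_zero,
      subwordCount_two_mul_one_one_zero]
    push_cast
    split_ifs <;> ring
  | h_odd n ih =>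
    rw [rowCount_two_pow_two_mul_add_one, Nat.cast_mul, ih, subwordCount_two_mul_add_one_one,
      subwordCount_two_mul_add_one_one_zero, subwordCount_two_mul_add_one_one_zero_zero,
      subwordCount_two_mul_add_one_one_one_zero]
    push_cast
    ring
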